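/- Let K be a field, A = K[x_1, ..., x_n], and F ∈ A^{l×m} with rank(F) = r > 0. If the r × r reduced minors of F generate the unit ideal A (i.e. J_r(F) = A), then there exist U ∈ GL_l(A) and V ∈ GL_m(A) such that U·F·V is the block matrix with an r × r block G ∈ A^{r×r} in the upper-left corner and zeros elsewhere. -/

import Mathlib

/-- The set of all `i × i` minors of a matrix. -/
def minorsSet {R : Type*} [CommRing R] {l m : ℕ} (i : ℕ)
    (F : Matrix (Fin l) (Fin m) R) : Set R :=
  {a | ∃ (f : Fin i → Fin l) (g : Fin i → Fin m),
      StrictMono f ∧ StrictMono g ∧ a = (F.submatrix f g).det}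

/-- `d` is a greatest common divisor of the set `s`. -/
def IsGcdOf {R : Type*} [CommRing R] (d : R) (s : Set R) : Prop :=
  (∀ a ∈ s, d ∣ a) ∧ ∀ c : R, (∀ a ∈ s, c ∣ a) → c ∣ d

/-- `J_i(F) = A`: letting `d` be a gcd of the `i × i` minors of `F`, the `i × i`
reduced minors (the minors divided by `d`) generate the unit ideal. -/
def ReducedMinorsUnitIdeal {R : Type*} [CommRing R] {l m : ℕ} (i : ℕ)
    (F : Matrix (Fin l) (Fin m) R) : Prop :=
  ∃ d : R, IsGcdOf d (minorsSet i F) ∧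
    Ideal.span {b : R | d * b ∈ minorsSet i F} = ⊤

section

open Polynomial TensorProduct

/-- A finite projective module over a UFD that embeds into the ring is free. -/
theorem free_of_injective_to_ufd {A P : Type*} [CommRing A] [IsDomain A]
    [UniqueFactorizationMonoid A] [AddCommGroup P] [Module A P] [Module.Finite A P]
    [Module.Projective A P] (α : P →ₗ[A] A) (hα : Function.Injective α) : Module.Free A P := by
  classical
  let _ : StrongNormalizationMonoid A := UniqueFactorizationMonoid.strongNormalizationMonoid
  let _ : StrongNormalizedGCDMonoid A := UniqueFactorizationMonoid.toStrongNormalizedGCDMonoid A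
  obtain ⟨n, π, s, -, -, hs⟩ := Module.Finite.exists_comp_eq_id_of_projective A P
  set q : Fin n → P := fun i => π (Pi.single i 1) with hq
  have hsum : ∀ x, ∑ i, s x i • q i = x := fun x => by
    have h := LinearMap.congr_fun hs x
    simp only [LinearMap.comp_apply, LinearMap.id_apply] at h
    conv_rhs => rw [← h, LinearMap.pi_apply_eq_sum_univ π (s x)]
    refine Finset.sum_congr rfl fun i _ => ?_
    simp only [hq]
    congr 2
    funext k
    simp [Pi.single_apply, eq_comm]
  have hαsum : ∀ x, ∑ i, s x i * α (q i) = α x := fun x => by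
    conv_rhs => rw [← hsum x]
    simp
  have hcomm : ∀ x y, α x • y = α y • x := fun x y => hα (by simp [mul_comm])
  by_cases hzero : ∀ i, α (q i) = 0
  · have : Subsingleton P := ⟨fun x y => hα (by rw [← hαsum x, ← hαsum y]; simp [hzero])⟩
    infer_instance
  push Not at hzero
  obtain ⟨j, hj⟩ := hzero
  obtain ⟨b, hb, hgcd⟩ := Finset.extract_gcd (s := Finset.univ) (fun i => α (q i))
    ⟨j, Finset.mem_univ j⟩
  set d := Finset.univ.gcd fun i => α (q i)
  simp only [Finset.mem_univ, forall_const] at hb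
  have hd : d ≠ 0 := fun h => hj (by rw [hb j, h, zero_mul])
  have hbj : b j ≠ 0 := fun h => hj (by rw [hb j, h, mul_zero])
  have hdvd : ∀ i, b j ∣ s (q j) i := fun i => by
    have h : ∀ k, b j ∣ s (q j) i * b k := fun k => by
      have h := congrArg (fun z => s z i) (hcomm (q k) (q j))
      simp only [map_smul, Pi.smul_apply, smul_eq_mul, hb, mul_assoc] at h
      exact ⟨s (q k) i, by rw [mul_comm, mul_left_cancel₀ hd h]⟩
    have h' := Finset.dvd_gcd (s := Finset.univ) (f := fun k => s (q j) i * b k) fun k _ => h k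
    rw [Finset.gcd_mul_left, hgcd, mul_one] at h'
    exact (dvd_normalize_iff).1 h'
  choose c hc using hdvd
  set x₀ : P := ∑ i, c i • q i
  have hx₀ : α x₀ = d := by
    apply mul_left_cancel₀ hbj
    have h := hαsum (q j)
    rw [hb j] at h
    simp only [x₀, map_sum, map_smul, smul_eq_mul, Finset.mul_sum, ← mul_assoc, ← hc]
    rw [h, mul_comm]
  refine Module.Free.of_equiv (LinearEquiv.ofBijective (LinearMap.toSpanSingleton A P x₀) ⟨?_, ?_⟩)
  · intro u v huv
    have := congrArg α huv
    simpa [hx₀, hd] using this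
  · intro x
    have hdx : d ∣ α x := by
      rw [← hαsum x]
      exact Finset.dvd_sum fun i _ => Dvd.dvd.mul_left ⟨b i, hb i⟩ _
    obtain ⟨e, he⟩ := hdx
    exact ⟨e, hα (by simp [hx₀, he, mul_comm])⟩

/-- An ideal of `L[X]`, `L` local, which contains a monic polynomial and an element congruent to
`1` modulo the maximal ideal of `L`, is the unit ideal. -/
theorem ideal_eq_top_of_monic_mem {L : Type*} [CommRing L] [IsLocalRing L] (I : Ideal L[X])
    {h u : L[X]} (hh : h.Monic) (hI : h ∈ I) (hu : u ∈ I)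
    (hu1 : u.map (IsLocalRing.residue L) = 1) : I = ⊤ := by
  by_contra hne
  obtain ⟨M, hM, hIM⟩ := Ideal.exists_le_maximal I hne
  have hintegral : ((Ideal.Quotient.mk M).comp C).IsIntegral := by
    have hX : ((Ideal.Quotient.mk M).comp C).IsIntegralElem (Ideal.Quotient.mk M X) := by
      refine ⟨h, hh, ?_⟩
      rw [← Polynomial.hom_eval₂, eval₂_C_X]
      exact Ideal.Quotient.eq_zero_iff_mem.2 (hIM hI)
    intro y
    obtain ⟨p, rfl⟩ := Ideal.Quotient.mk_surjective y
    have hp : Ideal.Quotient.mk M p =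
        p.eval₂ ((Ideal.Quotient.mk M).comp C) (Ideal.Quotient.mk M X) := by
      rw [← Polynomial.hom_eval₂, eval₂_C_X]
    rw [hp, Polynomial.eval₂_eq_sum_range]
    have := Ideal.Quotient.field M
    let := ((Ideal.Quotient.mk M).comp C).toAlgebra
    exact IsIntegral.sum _ fun i _ =>
      IsIntegral.mul (isIntegral_algebraMap (A := L[X] ⧸ M)) (IsIntegral.pow hX i)
  have hmax : (M.comap (C : L →+* L[X])).IsMaximal := by
    have h0 : M.comap (C : L →+* L[X]) =
        (⊥ : Ideal (L[X] ⧸ M)).comap ((Ideal.Quotient.mk M).comp C) := by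
      rw [← Ideal.comap_comap, ← RingHom.ker_eq_comap_bot, Ideal.mk_ker]
    rw [h0]
    have : (⊥ : Ideal (L[X] ⧸ M)).IsMaximal := by
      let := Ideal.Quotient.field M
      exact Ideal.bot_isMaximal
    exact Ideal.isMaximal_comap_of_isIntegral_of_isMaximal' _ hintegral _
  have hmax' := IsLocalRing.eq_maximalIdeal hmax
  have h1 : u - 1 ∈ M := by
    have h2 : u - 1 ∈ Ideal.map (C : L →+* L[X]) (IsLocalRing.maximalIdeal L) := by
      rw [Ideal.mem_map_C_iff]
      intro n
      rw [← Ideal.Quotient.eq_zero_iff_mem]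
      have h3 : (u - 1).map (IsLocalRing.residue L) = 0 := by simp [hu1]
      have := congrArg (fun p => p.coeff n) h3
      rwa [coeff_map, coeff_zero] at this
    rw [← hmax'] at h2
    exact Ideal.map_comap_le h2
  apply hM.ne_top
  rw [Ideal.eq_top_iff_one]
  have := M.sub_mem (hIM hu) h1
  simpa using this

/-- Over a principal ideal domain, a vector in a free module of rank at least two is killed by some
functional that takes the value one. -/
theorem exists_functional_of_pid {B Q : Type*} [CommRing B] [IsDomain B] [IsPrincipalIdealRing B]
    [AddCommGroup Q] [Module B Q] {ι : Type*} (b : Module.Basis ι B Q) {i j : ι} (hij : i ≠ j)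
    (w : Q) : ∃ (p : Q) (φ : Q →ₗ[B] B), φ p = 1 ∧ φ w = 0 := by
  classical
  let _ := IsBezout.toGCDDomain B
  by_cases h0 : gcd (b.repr w i) (b.repr w j) = 0
  · exact ⟨b i, b.coord i, by simp, by simpa using ((gcd_eq_zero_iff _ _).1 h0).1⟩
  obtain ⟨u, hu⟩ := gcd_dvd_left (b.repr w i) (b.repr w j)
  obtain ⟨v, hv⟩ := gcd_dvd_right (b.repr w i) (b.repr w j)
  obtain ⟨x, y, hxy⟩ := exists_gcd_eq_mul_add_mul (b.repr w i) (b.repr w j)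
  set g := gcd (b.repr w i) (b.repr w j)
  have h1 : u * x + v * y = 1 := by
    apply mul_left_cancel₀ h0
    rw [mul_add, ← mul_assoc, ← mul_assoc, ← hu, ← hv, mul_one, ← hxy]
  refine ⟨y • b i - x • b j, v • b.coord i - u • b.coord j, ?_, ?_⟩
  · simp [hij, hij.symm]
    linear_combination h1
  · simp only [LinearMap.sub_apply, LinearMap.smul_apply, Module.Basis.coord_apply, smul_eq_mul]
    linear_combination v * hu - u * hv

/-- Let `A → B` be surjective with `B` a principal ideal domain, and `P` a finite projective
`A`-module that is isomorphic to `A ^ r`, `r ≥ 2`, up to multiplication by an element `f` not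
mapping to `0` in `B`. Then, over `B`, every vector of `P` is killed by some functional that takes
the value one. -/
theorem exists_functional_of_surjective {A B P : Type*} [CommRing A] [CommRing B] [IsDomain B]
    [IsPrincipalIdealRing B] [AddCommGroup P] [Module A P] [Module.Finite A P]
    [Module.Projective A P] [Algebra A B] (hsurj : Function.Surjective (algebraMap A B))
    {r : ℕ} (hr : 2 ≤ r) {f : A} (hf : algebraMap A B f ≠ 0) (e : Fin r → P)
    (a : Fin r → P →ₗ[A] A) (hae : ∀ i j, a i (e j) = if i = j then f else 0) (w : P) :
    ∃ (p : P) (φ : P →ₗ[A] A), algebraMap A B (φ p) = 1 ∧ algebraMap A B (φ w) = 0 := by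
  classical
  let b := Module.Free.chooseBasis B (B ⊗[A] P)
  have hli : LinearIndependent B fun i => (1 : B) ⊗ₜ[A] e i := by
    rw [Fintype.linearIndependent_iff]
    intro c hc i
    let ψ : B ⊗[A] P →ₗ[B] B :=
      (TensorProduct.AlgebraTensorModule.rid A B B).toLinearMap ∘ₗ (a i).baseChange B
    have h := congrArg ψ hc
    simpa [ψ, hae, hf, Algebra.smul_def, apply_ite (algebraMap A B)] using h
  have hcard : 1 < Fintype.card (Module.Free.ChooseBasisIndex B (B ⊗[A] P)) := by
    have h := hli.fintype_card_le_finrank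
    rw [Module.finrank_eq_card_basis b, Fintype.card_fin] at h
    omega
  obtain ⟨i, j, hij⟩ := Fintype.one_lt_card_iff.1 hcard
  obtain ⟨p', φ', hp', hw'⟩ := exists_functional_of_pid b hij ((1 : B) ⊗ₜ[A] w)
  have hmk : Function.Surjective fun p : P => (1 : B) ⊗ₜ[A] p := by
    intro z
    induction z with
    | zero => exact ⟨0, by simp⟩
    | add x y hx hy =>
      obtain ⟨x, rfl⟩ := hx
      obtain ⟨y, rfl⟩ := hy
      exact ⟨x + y, by simp [TensorProduct.tmul_add]⟩
    | tmul c x =>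
      obtain ⟨c, rfl⟩ := hsurj c
      exact ⟨c • x, by simp only [← TensorProduct.smul_tmul, Algebra.smul_def, mul_one]⟩
  obtain ⟨p, rfl⟩ := hmk p'
  obtain ⟨φ, hφ⟩ := Module.projective_lifting_property (Algebra.linearMap A B)
    (φ'.restrictScalars A ∘ₗ TensorProduct.mk A B P 1) hsurj
  have hφ' : ∀ x, algebraMap A B (φ x) = φ' (1 ⊗ₜ x) := fun x => LinearMap.congr_fun hφ x
  exact ⟨p, φ, by rw [hφ', hp'], by rw [hφ', hw']⟩

/-- The projection onto the kernel of a functional `φ` along a vector `p` with `φ p = 1`. -/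
def kerProj {A P : Type*} [CommRing A] [AddCommGroup P] [Module A P] (φ : P →ₗ[A] A) (p : P)
    (hp : φ p = 1) : P →ₗ[A] LinearMap.ker φ :=
  (LinearMap.id - φ.smulRight p).codRestrict _ fun x => by simp [hp]

theorem kerProj_coe {A P : Type*} [CommRing A] [AddCommGroup P] [Module A P] (φ : P →ₗ[A] A)
    (p : P) (hp : φ p = 1) (x : P) : (kerProj φ p hp x : P) = x - φ x • p := rfl

theorem kerProj_apply_self {A P : Type*} [CommRing A] [AddCommGroup P] [Module A P]
    (φ : P →ₗ[A] A) (p : P) (hp : φ p = 1) : kerProj φ p hp p = 0 :=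
  Subtype.ext (by simp [kerProj_coe, hp])

theorem kerProj_apply_ker {A P : Type*} [CommRing A] [AddCommGroup P] [Module A P]
    (φ : P →ₗ[A] A) (p : P) (hp : φ p = 1) (x : LinearMap.ker φ) : kerProj φ p hp x = x :=
  Subtype.ext (by simp [kerProj_coe, LinearMap.mem_ker.1 x.2])

theorem free_of_free_ker {A P : Type*} [CommRing A] [AddCommGroup P] [Module A P]
    (φ : P →ₗ[A] A) (p : P) (hp : φ p = 1) [Module.Free A (LinearMap.ker φ)] :
    Module.Free A P := by
  let ε : (A × LinearMap.ker φ) ≃ₗ[A] P := LinearEquiv.ofLinearMap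
    ((LinearMap.toSpanSingleton A P p).coprod (LinearMap.ker φ).subtype)
    (φ.prod (kerProj φ p hp))
    (LinearMap.ext fun x => by simp [kerProj_coe])
    (LinearMap.ext fun x => by simp [hp, kerProj_apply_self, kerProj_apply_ker])
  exact Module.Free.of_equiv ε

/-- If `P` is isomorphic to `A ^ (r + 1)` up to multiplication by `f`, then the kernel of `φ` is
isomorphic to `A ^ r` up to multiplication by `a 0 p * f`, where `φ p = 1`. -/
theorem exists_almost_basis_ker {A P : Type*} [CommRing A] [AddCommGroup P] [Module A P] {r : ℕ}
    {f : A} (e : Fin (r + 1) → P) (a : Fin (r + 1) → P →ₗ[A] A)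
    (hae : ∀ i j, a i (e j) = if i = j then f else 0) (hea : ∀ x, ∑ i, a i x • e i = f • x)
    (φ : P →ₗ[A] A) (p : P) (hp : φ p = 1) :
    ∃ (e' : Fin r → LinearMap.ker φ) (a' : Fin r → LinearMap.ker φ →ₗ[A] A),
      (∀ i j, a' i (e' j) = if i = j then a 0 p * f else 0) ∧
      ∀ x, ∑ i, a' i x • e' i = (a 0 p * f) • x := by
  let b : Fin r → P →ₗ[A] A := fun i => a 0 p • a i.succ - (a i.succ p) • a 0
  have hbp : ∀ i, b i p = 0 := fun i => by
    simp only [b, LinearMap.sub_apply, LinearMap.smul_apply, smul_eq_mul]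
    ring
  refine ⟨fun i => kerProj φ p hp (e i.succ), fun i => b i ∘ₗ (LinearMap.ker φ).subtype, ?_, ?_⟩
  · intro i j
    simp only [LinearMap.comp_apply, Submodule.subtype_apply, kerProj_coe, map_sub, map_smul, hbp]
    simp [b, hae, (Fin.succ_ne_zero j).symm]
  · intro x
    have h1 := hea x
    have h2 := hea p
    rw [Fin.sum_univ_succ] at h1 h2
    have h3 : ∑ i : Fin r, b i x • e i.succ = (a 0 p * f) • (x : P) - (a 0 x * f) • p := by
      have h4 : ∑ i : Fin r, b i x • e i.succ =
          a 0 p • ∑ i : Fin r, a i.succ x • e i.succ -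
            a 0 x • ∑ i : Fin r, a i.succ p • e i.succ := by
        simp only [b, Finset.smul_sum, ← Finset.sum_sub_distrib, smul_smul, ← sub_smul]
        refine Finset.sum_congr rfl fun i _ => ?_
        simp [mul_comm]
      rw [h4, eq_sub_of_add_eq' h1, eq_sub_of_add_eq' h2]
      module
    have h5 := congrArg (kerProj φ p hp) h3
    simpa [kerProj_apply_self, kerProj_apply_ker] using h5

theorem exists_monic_add_X_pow_mul {L : Type*} [CommRing L] [IsDomain L] (q : L[X]) {f : L[X]}
    (hf : f.Monic) : ∃ N : ℕ, (q + X ^ N * f).Monic := by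
  refine ⟨q.natDegree + 1, ((monic_X_pow _).mul hf).add_of_right ?_⟩
  rw [degree_mul, degree_X_pow]
  refine lt_of_le_of_lt degree_le_natDegree ?_
  rw [degree_eq_natDegree hf.ne_zero]
  norm_cast
  omega

/-- **Horrocks' theorem** over a local factorial base: a finite projective `L[X]`-module which
becomes free after inverting a monic polynomial is free. -/
theorem horrocks {L : Type*} [CommRing L] [IsDomain L] [IsLocalRing L]
    [UniqueFactorizationMonoid L] (r : ℕ) {P : Type*} [AddCommGroup P] [Module L[X] P]
    [Module.Finite L[X] P] [Module.Projective L[X] P] {f : L[X]} (hf : f.Monic) (e : Fin r → P)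
    (a : Fin r → P →ₗ[L[X]] L[X]) (hae : ∀ i j, a i (e j) = if i = j then f else 0)
    (hea : ∀ x, ∑ i, a i x • e i = f • x) : Module.Free L[X] P := by
  induction r generalizing P f with
  | zero =>
    have : Subsingleton P := subsingleton_of_forall_eq 0 fun x => by
      have h := hea x
      simpa [hf.ne_zero] using h.symm
    infer_instance
  | succ r ih =>
    rcases Nat.eq_zero_or_pos r with rfl | hr
    · refine free_of_injective_to_ufd (a 0) fun x y hxy => ?_
      have hx : a 0 x • e 0 = f • x := by simpa using hea x
      have hy : a 0 y • e 0 = f • y := by simpa using hea y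
      rw [hxy, hy] at hx
      exact (smul_right_injective P hf.ne_zero hx).symm
    let _ : Algebra L[X] (IsLocalRing.ResidueField L)[X] :=
      (mapRingHom (IsLocalRing.residue L)).toAlgebra
    have hmap : ∀ q : L[X], algebraMap L[X] (IsLocalRing.ResidueField L)[X] q =
      q.map (IsLocalRing.residue L) := fun q => rfl
    obtain ⟨p₀, ψ, hp₀, hw⟩ := exists_functional_of_surjective
      (B := (IsLocalRing.ResidueField L)[X])
      (map_surjective _ IsLocalRing.residue_surjective) (by omega : 2 ≤ r + 1)
      (by rw [hmap]; exact (hf.map _).ne_zero) e a hae (e 0)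
    obtain ⟨N, hN⟩ := exists_monic_add_X_pow_mul (a 0 p₀) hf
    have hh : (a 0 (p₀ + (X ^ N : L[X]) • e 0)).Monic := by
      rw [map_add, map_smul, hae, if_pos rfl, smul_eq_mul]
      exact hN
    have hψ : (ψ (p₀ + (X ^ N : L[X]) • e 0)).map (IsLocalRing.residue L) = 1 := by
      rw [map_add, map_smul, smul_eq_mul, Polynomial.map_add, Polynomial.map_mul, ← hmap (ψ _),
        ← hmap (ψ (e 0)), hp₀, hw, mul_zero, add_zero]
    have htop := ideal_eq_top_of_monic_mem
      (LinearMap.range (LinearMap.applyₗ (R := L[X]) (M := P) (M₂ := L[X])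
        (p₀ + (X ^ N : L[X]) • e 0))) hh ⟨a 0, rfl⟩ ⟨ψ, rfl⟩ hψ
    obtain ⟨φ, hφ⟩ := (Ideal.eq_top_iff_one _).1 htop
    generalize p₀ + (X ^ N : L[X]) • e 0 = p at hh hφ
    replace hφ : φ p = 1 := hφ
    have : Module.Projective L[X] (LinearMap.ker φ) :=
      Module.Projective.of_split (LinearMap.ker φ).subtype (kerProj φ p hφ)
        (LinearMap.ext (kerProj_apply_ker φ p hφ))
    have : Module.Finite L[X] (LinearMap.ker φ) :=
      Module.Finite.of_surjective (kerProj φ p hφ) fun x => ⟨x, kerProj_apply_ker φ p hφ x⟩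
    obtain ⟨e', a', hae', hea'⟩ := exists_almost_basis_ker e a hae hea φ p hφ
    have : Module.Free L[X] (LinearMap.ker φ) := ih (hh.mul hf) e' a' hae' hea'
    exact free_of_free_ker φ p hφ

/-- The diagonal idempotent with `1` in the first `r` places. -/
def stdProj (A : Type*) [CommRing A] (N r : ℕ) : Matrix (Fin N) (Fin N) A :=
  Matrix.diagonal fun i => if (i : ℕ) < r then 1 else 0

theorem stdProj_map {A B : Type*} [CommRing A] [CommRing B] (φ : A →+* B) (N r : ℕ) :
    (stdProj A N r).map φ = stdProj B N r := by
  rw [stdProj, stdProj, Matrix.diagonal_map (map_zero φ)]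
  congr 1
  ext i
  simp [apply_ite φ]

/-- The range of an idempotent matrix is a direct summand. -/
theorem projective_range_of_idempotent {A : Type*} [CommRing A] {N : ℕ}
    {E : Matrix (Fin N) (Fin N) A} (hE : E * E = E) :
    Module.Projective A (LinearMap.range E.mulVecLin) := by
  refine Module.Projective.of_split (LinearMap.range E.mulVecLin).subtype
    E.mulVecLin.rangeRestrict (LinearMap.ext ?_)
  rintro ⟨_, v, rfl⟩
  exact Subtype.ext (by simp [hE])

theorem mulVec_eq_of_mem_range {A : Type*} [CommRing A] {N : ℕ}
    {E : Matrix (Fin N) (Fin N) A} (hE : E * E = E) {x : Fin N → A}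
    (hx : x ∈ LinearMap.range E.mulVecLin) : E.mulVec x = x := by
  obtain ⟨v, rfl⟩ := hx
  simp [hE]

theorem idempotent_one_sub {A : Type*} [CommRing A] {N : ℕ}
    {E : Matrix (Fin N) (Fin N) A} (hE : E * E = E) : (1 - E) * (1 - E) = 1 - E := by
  simp [mul_sub, sub_mul, hE]

/-- An idempotent matrix with free image and kernel is conjugate to a standard one. -/
theorem exists_conj_stdProj_of_free {A : Type*} [CommRing A] [Nontrivial A] {N : ℕ}
    {E : Matrix (Fin N) (Fin N) A} (hE : E * E = E)
    (h₁ : Module.Free A (LinearMap.range E.mulVecLin))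
    (h₂ : Module.Free A (LinearMap.range (1 - E).mulVecLin)) :
    ∃ r ≤ N, ∃ U U' : Matrix (Fin N) (Fin N) A, U * U' = 1 ∧ U' * U = 1 ∧
      E * U = U * stdProj A N r := by
  let r := Module.finrank A (LinearMap.range E.mulVecLin)
  let s := Module.finrank A (LinearMap.range (1 - E).mulVecLin)
  let b₁ : Module.Basis (Fin r) A (LinearMap.range E.mulVecLin) := Module.finBasis A _
  let b₂ : Module.Basis (Fin s) A (LinearMap.range (1 - E).mulVecLin) := Module.finBasis A _
  have hE' := idempotent_one_sub hE
  have h21 : ∀ x : LinearMap.range (1 - E).mulVecLin, E.mulVec x = 0 := fun x => by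
    have := mulVec_eq_of_mem_range hE' x.2
    simpa [Matrix.sub_mulVec] using this
  have h11 : ∀ x : LinearMap.range E.mulVecLin, E.mulVec x = x := fun x =>
    mulVec_eq_of_mem_range hE x.2
  let ε : (LinearMap.range E.mulVecLin × LinearMap.range (1 - E).mulVecLin) ≃ₗ[A] (Fin N → A) :=
    LinearEquiv.ofLinearMap
      ((LinearMap.range E.mulVecLin).subtype.coprod (LinearMap.range (1 - E).mulVecLin).subtype)
      (E.mulVecLin.rangeRestrict.prod (1 - E).mulVecLin.rangeRestrict)
      (LinearMap.ext fun x => by simp)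
      (LinearMap.ext fun x => Prod.ext
        (Subtype.ext (by simp [h11, h21]))
        (Subtype.ext (by simp [h11, h21])))
  let b₀ : Module.Basis (Fin r ⊕ Fin s) A (Fin N → A) := (b₁.prod b₂).map ε
  have hN : r + s = N := by
    have h := Module.finrank_eq_card_basis b₀
    simpa using h.symm
  let b : Module.Basis (Fin N) A (Fin N → A) := b₀.reindex (finSumFinEquiv.trans (finCongr hN))
  have hb : ∀ j, E.mulVec (b j) = if (j : ℕ) < r then b j else 0 := by
    intro j
    obtain ⟨x, rfl⟩ := (finSumFinEquiv.trans (finCongr hN)).surjective j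
    cases x with
    | inl i => simp [b, b₀, ε, h11]
    | inr i => simp [b, b₀, ε, h21]
  refine ⟨r, by omega, (Pi.basisFun A (Fin N)).toMatrix b, b.toMatrix (Pi.basisFun A (Fin N)),
    Module.Basis.toMatrix_mul_toMatrix_flip _ _, Module.Basis.toMatrix_mul_toMatrix_flip _ _, ?_⟩
  ext i j
  rw [stdProj, Matrix.mul_diagonal]
  have h := congrFun (hb j) i
  simp only [Matrix.mul_apply, Module.Basis.toMatrix_apply, Pi.basisFun_repr]
  simp only [Matrix.mulVec, dotProduct] at h
  rw [h]
  split_ifs <;> simp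

/-- Horrocks' theorem for the image of an idempotent matrix. -/
theorem free_range_of_conj_up_to_monic {L : Type*} [CommRing L] [IsDomain L] [IsLocalRing L]
    [UniqueFactorizationMonoid L] {N : ℕ} {E G G' : Matrix (Fin N) (Fin N) L[X]} {f : L[X]}
    (p : Fin N → Prop) [DecidablePred p] (hE : E * E = E) (hf : f.Monic)
    (hGG' : G * G' = f • 1) (hG'G : G' * G = f • 1)
    (hEG : E * G = G * Matrix.diagonal fun i => if p i then 1 else 0) :
    Module.Free L[X] (LinearMap.range E.mulVecLin) := by
  have := projective_range_of_idempotent hE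
  have hG'E : G' * E = (Matrix.diagonal fun i => if p i then 1 else 0) * G' := by
    apply smul_right_injective _ hf.ne_zero
    calc f • (G' * E) = G' * E * (G * G') := by rw [hGG']; simp
      _ = G' * (E * G) * G' := by simp only [mul_assoc]
      _ = G' * G * ((Matrix.diagonal fun i => if p i then 1 else 0) * G') := by
        rw [hEG]; simp only [mul_assoc]
      _ = _ := by rw [hG'G]; simp
  have hcol : ∀ j, p j → (fun i => G i j) ∈ LinearMap.range E.mulVecLin := fun j hj =>
    ⟨fun i => G i j, funext fun i => by
      have h := congrFun (congrFun hEG i) j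
      rw [Matrix.mul_diagonal, if_pos hj, mul_one] at h
      exact h⟩
  let ε := (Fintype.equivFin {i // p i}).symm
  refine horrocks _ hf (fun j => ⟨fun i => G i (ε j), hcol _ (ε j).2⟩)
    (fun i => LinearMap.proj ((ε i : Fin N)) ∘ₗ G'.mulVecLin ∘ₗ Submodule.subtype _) ?_ ?_
  · intro i j
    have h := congrFun (congrFun hG'G (ε i)) (ε j)
    simp only [Matrix.smul_apply, Matrix.one_apply, Subtype.coe_inj, ε.injective.eq_iff] at h
    simpa [Matrix.mul_apply, Matrix.mulVec, dotProduct] using h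
  · intro x
    apply Subtype.ext
    have hx := mulVec_eq_of_mem_range hE x.2
    have hzero : ∀ i, ¬ p i → G'.mulVec x i = 0 := fun i hi => by
      rw [← hx, Matrix.mulVec_mulVec, hG'E, ← Matrix.mulVec_mulVec, Matrix.mulVec_diagonal,
        if_neg hi, zero_mul]
    have hfx : G.mulVec (G'.mulVec x) = f • (x : Fin N → L[X]) := by
      rw [Matrix.mulVec_mulVec, hGG', Matrix.smul_mulVec, Matrix.one_mulVec]
    ext1 k
    have hk := congrFun hfx k
    simp only [Submodule.coe_sum, Submodule.coe_smul, Finset.sum_apply, Pi.smul_apply,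
      LinearMap.comp_apply, LinearMap.proj_apply, Submodule.subtype_apply,
      Matrix.mulVecLin_apply, smul_eq_mul] at hk ⊢
    rw [← hk, Equiv.sum_comp ε fun i : {i // p i} => G'.mulVec x i * G k i]
    rw [Matrix.mulVec, dotProduct, ← Fintype.sum_subtype_add_sum_subtype p,
      Fintype.sum_eq_zero (fun i : {i // ¬ p i} => G k i * G'.mulVec x i)
        (fun i => by rw [hzero i i.2, mul_zero]), add_zero]
    exact Finset.sum_congr rfl fun i _ => mul_comm _ _

/-- Horrocks' theorem for idempotent matrices. -/
theorem exists_conj_of_conj_up_to_monic {L : Type*} [CommRing L] [IsDomain L] [IsLocalRing L]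
    [UniqueFactorizationMonoid L] {N r : ℕ} {E G G' : Matrix (Fin N) (Fin N) L[X]} {f : L[X]}
    (hE : E * E = E) (hf : f.Monic) (hGG' : G * G' = f • 1) (hG'G : G' * G = f • 1)
    (hEG : E * G = G * stdProj L[X] N r) :
    ∃ r ≤ N, ∃ U U' : Matrix (Fin N) (Fin N) L[X], U * U' = 1 ∧ U' * U = 1 ∧
      E * U = U * stdProj L[X] N r := by
  refine exists_conj_stdProj_of_free hE
    (free_range_of_conj_up_to_monic (fun i => (i : ℕ) < r) hE hf hGG' hG'G hEG)
    (free_range_of_conj_up_to_monic (fun i => ¬ (i : ℕ) < r) (idempotent_one_sub hE) hf hGG' hG'G ?_)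
  rw [sub_mul, hEG, one_mul]
  nth_rw 1 [← mul_one G]
  rw [← mul_sub, stdProj, ← Matrix.diagonal_one, Matrix.diagonal_sub]
  congr 2
  ext1 i
  split_ifs <;> simp

/-- Clearing denominators in a conjugation over a localization. -/
theorem exists_clear_denominators {A B : Type*} [CommRing A] [CommRing B] [Algebra A B]
    (S : Submonoid A) [IsLocalization S B] (hinj : Function.Injective (algebraMap A B)) {N : ℕ}
    {E D : Matrix (Fin N) (Fin N) A} {U U' : Matrix (Fin N) (Fin N) B} (hUU' : U * U' = 1)
    (hU'U : U' * U = 1) (hEU : E.map (algebraMap A B) * U = U * D.map (algebraMap A B)) :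
    ∃ s ∈ S, ∃ G G' : Matrix (Fin N) (Fin N) A, G * G' = s • 1 ∧ G' * G = s • 1 ∧
      E * G = G * D := by
  have hclear : ∀ V : Matrix (Fin N) (Fin N) B, ∃ s ∈ S, ∃ H : Matrix (Fin N) (Fin N) A,
      H.map (algebraMap A B) = algebraMap A B s • V := by
    intro V
    obtain ⟨s, hs⟩ := IsLocalization.exist_integer_multiples_of_finite S
      fun x : Fin N × Fin N => V x.1 x.2
    choose H hH using hs
    refine ⟨s, s.2, Matrix.of fun i j => H (i, j), ?_⟩
    ext i j
    simp [hH, Algebra.smul_def]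
  obtain ⟨s, hs, G, hG⟩ := hclear U
  obtain ⟨s', hs', G', hG'⟩ := hclear U'
  have hmap : Function.Injective fun M : Matrix (Fin N) (Fin N) A => M.map (algebraMap A B) :=
    Matrix.map_injective hinj
  have hone : ∀ c : A, (c • (1 : Matrix (Fin N) (Fin N) A)).map (algebraMap A B) =
      algebraMap A B c • 1 := fun c => by
    ext i j
    simp [Matrix.one_apply, apply_ite (algebraMap A B)]
  refine ⟨s * s', S.mul_mem hs hs', G, G', hmap ?_, hmap ?_, hmap ?_⟩
  · simp only [Matrix.map_mul, hG, hG', hone]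
    rw [smul_mul_smul_comm, hUU', map_mul]
  · simp only [Matrix.map_mul, hG, hG', hone]
    rw [smul_mul_smul_comm, hU'U, map_mul, mul_comm]
  · simp only [Matrix.map_mul, hG]
    simp [hEU]

/-- The substitution `X ↦ X + a Y` from `R[X]` to `R[X][Y]`. -/
noncomputable def shiftHom {R : Type*} [CommRing R] (a : R) : R[X] →+* R[X][X] :=
  eval₂RingHom (C.comp C) (C X + C (C a) * X)

/-- `E(X + a Y)` is conjugate to `E(X)` over `R[X][Y]`. -/
def ShiftConj {R : Type*} [CommRing R] {N : ℕ} (E : Matrix (Fin N) (Fin N) R[X]) (a : R) : Prop :=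
  ∃ U U' : Matrix (Fin N) (Fin N) R[X][X], U * U' = 1 ∧ U' * U = 1 ∧
    E.map (shiftHom a) * U = U * E.map C

theorem ShiftConj.add {R : Type*} [CommRing R] {N : ℕ} {E : Matrix (Fin N) (Fin N) R[X]} {a b : R}
    (ha : ShiftConj E a) (hb : ShiftConj E b) : ShiftConj E (a + b) := by
  obtain ⟨U, U', hUU', hU'U, hU⟩ := ha
  obtain ⟨V, V', hVV', hV'V, hV⟩ := hb
  let τ : R[X][X] →+* R[X][X] := eval₂RingHom (shiftHom b) X
  have h1 : τ.comp (shiftHom a) = shiftHom (a + b) := by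
    refine Polynomial.ringHom_ext (fun x => by simp [τ, shiftHom]) ?_
    simp only [shiftHom, τ, RingHom.comp_apply, coe_eval₂RingHom, eval₂_X, eval₂_C, eval₂_add,
      eval₂_mul, C_add]
    ring
  have h2 : τ.comp C = shiftHom b := by
    ext <;> simp [τ]
  have hmap : ∀ (σ : R[X] →+* R[X][X]), (E.map σ).map τ = E.map (τ.comp σ) := fun σ => by
    ext i j; simp
  have h3 := congrArg (fun M => M.map τ) hU
  simp only [Matrix.map_mul, hmap, h1, h2] at h3
  have h4 := congrArg (fun M => M.map τ) hUU'
  have h5 := congrArg (fun M => M.map τ) hU'U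
  simp only [Matrix.map_mul, map_zero, map_one, Matrix.map_one] at h4 h5
  refine ⟨U.map τ * V, V' * U'.map τ, ?_, ?_, ?_⟩
  · rw [mul_assoc, ← mul_assoc V, hVV', one_mul, h4]
  · rw [mul_assoc, ← mul_assoc (U'.map τ), h5, one_mul, hV'V]
  · rw [← mul_assoc, h3, mul_assoc, hV, mul_assoc]

theorem ShiftConj.mul_left {R : Type*} [CommRing R] {N : ℕ} {E : Matrix (Fin N) (Fin N) R[X]}
    {a : R} (c : R) (ha : ShiftConj E a) : ShiftConj E (c * a) := by
  obtain ⟨U, U', hUU', hU'U, hU⟩ := ha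
  let τ : R[X][X] →+* R[X][X] := eval₂RingHom C (C (C c) * X)
  have h1 : τ.comp (shiftHom a) = shiftHom (c * a) := by
    refine Polynomial.ringHom_ext (fun x => by simp [τ, shiftHom]) ?_
    simp only [shiftHom, τ, RingHom.comp_apply, coe_eval₂RingHom, eval₂_X, eval₂_C, eval₂_add,
      eval₂_mul, C_mul]
    ring
  have h2 : τ.comp C = C := by
    ext <;> simp [τ]
  have hmap : ∀ (σ : R[X] →+* R[X][X]), (E.map σ).map τ = E.map (τ.comp σ) := fun σ => by
    ext i j; simp
  have h3 := congrArg (fun M => M.map τ) hU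
  simp only [Matrix.map_mul, hmap, h1, h2] at h3
  have h4 := congrArg (fun M => M.map τ) hUU'
  have h5 := congrArg (fun M => M.map τ) hU'U
  simp only [Matrix.map_mul, map_zero, map_one, Matrix.map_one] at h4 h5
  exact ⟨U.map τ, U'.map τ, h4, h5, h3⟩

theorem ShiftConj.zero {R : Type*} [CommRing R] {N : ℕ} (E : Matrix (Fin N) (Fin N) R[X]) :
    ShiftConj E 0 := by
  have h : shiftHom (0 : R) = C := by
    ext <;> simp [shiftHom]
  exact ⟨1, 1, by simp, by simp, by simp [h]⟩

theorem exists_map_shiftHom_eq {R : Type*} [CommRing R] {N : ℕ} (s : R)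
    (G : Matrix (Fin N) (Fin N) R[X]) :
    ∃ W : Matrix (Fin N) (Fin N) R[X][X],
      G.map (shiftHom s) = G.map C + (C (C s) : R[X][X]) • (X : R[X][X]) • W := by
  have h : ∀ g : R[X], ∃ w, shiftHom s g = C g + C (C s) * (X * w) := by
    intro g
    have h1 : shiftHom s g = (g.map (C.comp C)).eval (C X + C (C s) * X) := by
      rw [eval_map]; rfl
    have h2 : C g = (g.map (C.comp C)).eval (C X) := by
      rw [eval_map, ← hom_eval₂, eval₂_C_X]
    obtain ⟨w, hw⟩ := sub_dvd_eval_sub (C X + C (C s) * X : R[X][X]) (C X) (g.map (C.comp C))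
    refine ⟨w, ?_⟩
    rw [← h1, ← h2] at hw
    linear_combination hw
  choose w hw using h
  exact ⟨Matrix.of fun i j => w (G i j), by ext1 i j; simp [hw]⟩

theorem ShiftConj.of_local {R : Type*} [CommRing R] [IsDomain R] {N : ℕ}
    {E G G' : Matrix (Fin N) (Fin N) R[X]} {D : Matrix (Fin N) (Fin N) R} {s : R} (hs : s ≠ 0)
    (hGG' : G * G' = (C s : R[X]) • 1) (hG'G : G' * G = (C s : R[X]) • 1)
    (hEG : E * G = G * D.map C) : ShiftConj E s := by
  obtain ⟨W, hW⟩ := exists_map_shiftHom_eq s G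
  obtain ⟨W', hW'⟩ := exists_map_shiftHom_eq s G'
  have hc : (C (C s) : R[X][X]) ≠ 0 := by simpa using hs
  have hcancel := smul_right_injective (Matrix (Fin N) (Fin N) R[X][X]) hc
  have hone : ∀ σ : R[X] →+* R[X][X], ((C s : R[X]) • (1 : Matrix (Fin N) (Fin N) R[X])).map σ =
      σ (C s) • 1 := fun σ => by
    ext1 i j
    simp [Matrix.one_apply, apply_ite σ]
  have hσ : shiftHom s (C s) = C (C s) := by simp [shiftHom]
  have hD : (D.map C).map (shiftHom s) = (D.map C).map (C : R[X] →+* R[X][X]) := by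
    ext1 i j; simp [shiftHom]
  have h1 := congrArg (fun M => M.map (C : R[X] →+* R[X][X])) hGG'
  have h2 := congrArg (fun M => M.map (C : R[X] →+* R[X][X])) hG'G
  have h3 := congrArg (fun M => M.map (shiftHom s)) hGG'
  have h4 := congrArg (fun M => M.map (shiftHom s)) hG'G
  have h5 := congrArg (fun M => M.map (shiftHom s)) hEG
  have h6 := congrArg (fun M => M.map (C : R[X] →+* R[X][X])) hEG
  simp only [Matrix.map_mul, hone, hσ, hD] at h1 h2 h3 h4 h5 h6
  set c : R[X][X] := C (C s)
  have hU : c • (1 + (X : R[X][X]) • (W * G'.map C)) = G.map (shiftHom s) * G'.map C := by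
    rw [hW, add_mul, h1, smul_add, smul_mul_assoc, smul_mul_assoc]
  have hU' : c • (1 + (X : R[X][X]) • (G.map C * W')) = G.map C * G'.map (shiftHom s) := by
    rw [hW', mul_add, h1, smul_add, mul_smul_comm, mul_smul_comm]
  set U := 1 + (X : R[X][X]) • (W * G'.map C)
  set U' := 1 + (X : R[X][X]) • (G.map C * W')
  have h7 : G'.map (C : R[X] →+* R[X][X]) * E.map C = (D.map C).map C * G'.map C := by
    apply hcancel
    calc c • (G'.map C * E.map C) = G'.map C * E.map C * (c • 1) := by simp
      _ = G'.map C * (E.map C * G.map C) * G'.map C := by rw [← h1]; simp only [mul_assoc]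
      _ = (G'.map C * G.map C) * ((D.map C).map C * G'.map C) := by
        rw [h6]; simp only [mul_assoc]
      _ = _ := by rw [h2]; simp
  refine ⟨U, U', ?_, ?_, ?_⟩
  · apply hcancel
    apply hcancel
    calc c • c • (U * U') = (c • U) * (c • U') := by simp
      _ = G.map (shiftHom s) * (G'.map C * G.map C) * G'.map (shiftHom s) := by
        rw [hU, hU']; simp only [mul_assoc]
      _ = c • c • 1 := by rw [h2, mul_smul_comm, mul_one, smul_mul_assoc, h3]
  · apply hcancel
    apply hcancel
    calc c • c • (U' * U) = (c • U') * (c • U) := by simp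
      _ = G.map C * (G'.map (shiftHom s) * G.map (shiftHom s)) * G'.map C := by
        rw [hU, hU']; simp only [mul_assoc]
      _ = c • c • 1 := by rw [h4, mul_smul_comm, mul_one, smul_mul_assoc, h1]
  · apply hcancel
    calc c • (E.map (shiftHom s) * U) = E.map (shiftHom s) * (c • U) := by simp
      _ = G.map (shiftHom s) * ((D.map C).map C * G'.map C) := by
        rw [hU, ← mul_assoc, h5, mul_assoc]
      _ = (c • U) * E.map C := by rw [← h7, hU, mul_assoc]
      _ = c • (U * E.map C) := by simp

/-- **Quillen patching** for matrices: if `E` is conjugate to a constant matrix locally on the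
base, then it is conjugate to `E(0)`. -/
theorem exists_conj_eval_zero {R : Type*} [CommRing R] [IsDomain R] {N : ℕ}
    (E : Matrix (Fin N) (Fin N) R[X])
    (hloc : ∀ m : Ideal R, m.IsMaximal → ∃ s ∉ m, ∃ (G G' : Matrix (Fin N) (Fin N) R[X])
      (D : Matrix (Fin N) (Fin N) R), G * G' = (C s : R[X]) • 1 ∧ G' * G = (C s : R[X]) • 1 ∧
        E * G = G * D.map C) :
    ∃ U U' : Matrix (Fin N) (Fin N) R[X], U * U' = 1 ∧ U' * U = 1 ∧
      E * U = U * (E.map (evalRingHom 0)).map C := by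
  let I : Ideal R :=
    { carrier := {a | ShiftConj E a}
      add_mem' := ShiftConj.add
      zero_mem' := ShiftConj.zero E
      smul_mem' := fun c _ h => h.mul_left c }
  have hI : I = ⊤ := by
    by_contra hne
    obtain ⟨m, hm, hIm⟩ := Ideal.exists_le_maximal I hne
    obtain ⟨s, hs, G, G', D, h1, h2, h3⟩ := hloc m hm
    exact hs (hIm (ShiftConj.of_local (fun h0 => hs (h0 ▸ m.zero_mem)) h1 h2 h3))
  obtain ⟨U, U', hUU', hU'U, hU⟩ : ShiftConj E 1 := (Ideal.eq_top_iff_one I).1 hI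
  let τ : R[X][X] →+* R[X] := eval₂RingHom (C.comp (evalRingHom 0)) X
  have h1 : τ.comp (shiftHom 1) = RingHom.id _ := by
    ext <;> simp [τ, shiftHom]
  have h2 : τ.comp C = C.comp (evalRingHom 0) := by
    ext <;> simp [τ]
  have hmap : ∀ (σ : R[X] →+* R[X][X]), (E.map σ).map τ = E.map (τ.comp σ) := fun σ => by
    ext1 i j; simp
  have h3 := congrArg (fun M => M.map τ) hU
  simp only [Matrix.map_mul, hmap, h1, h2] at h3
  have h4 := congrArg (fun M => M.map τ) hUU'
  have h5 := congrArg (fun M => M.map τ) hU'U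
  simp only [Matrix.map_mul, map_zero, map_one, Matrix.map_one] at h4 h5
  refine ⟨U.map τ, U'.map τ, h4, h5, ?_⟩
  have hid : E.map (RingHom.id R[X]) = E := by ext1 i j; simp
  have hcomp : (E.map (evalRingHom 0)).map C = E.map (C.comp (evalRingHom (0 : R))) := by
    ext1 i j; simp
  rw [hcomp, ← h3, hid]

/-- Every idempotent matrix is conjugate to a standard one; over a domain this says that
finitely generated projective modules are free. -/
def IdempotentsSplit (A : Type*) [CommRing A] : Prop :=
  ∀ (N : ℕ) (E : Matrix (Fin N) (Fin N) A), E * E = E → ∃ r ≤ N,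
    ∃ U U' : Matrix (Fin N) (Fin N) A, U * U' = 1 ∧ U' * U = 1 ∧ E * U = U * stdProj A N r

theorem matrix_map_smul_one {A B : Type*} [CommRing A] [CommRing B] (φ : A →+* B) {N : ℕ} (a : A) :
    (a • (1 : Matrix (Fin N) (Fin N) A)).map φ = φ a • 1 := by
  ext i j
  simp [Matrix.one_apply, apply_ite φ]

theorem matrix_map_mul_eq_smul_one {A B : Type*} [CommRing A] [CommRing B] (φ : A →+* B) {N : ℕ} {a : A}
    {G G' : Matrix (Fin N) (Fin N) A} (h : G * G' = a • 1) : G.map φ * G'.map φ = φ a • 1 := by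
  rw [← Matrix.map_mul, h, matrix_map_smul_one]

theorem matrix_map_mul_eq_one {A B : Type*} [CommRing A] [CommRing B] (φ : A →+* B) {N : ℕ}
    {G G' : Matrix (Fin N) (Fin N) A} (h : G * G' = 1) : G.map φ * G'.map φ = 1 := by
  rw [← Matrix.map_mul, h, Matrix.map_one φ (map_zero φ) (map_one φ)]

theorem IdempotentsSplit.of_ringEquiv {A B : Type*} [CommRing A] [CommRing B] (e : A ≃+* B)
    (h : IdempotentsSplit A) : IdempotentsSplit B := by
  intro N E hE
  obtain ⟨r, hr, U, U', hUU', hU'U, hEU⟩ := h N (E.map e.symm) (by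
    rw [← Matrix.map_mul, hE])
  refine ⟨r, hr, U.map (e : A →+* B), U'.map (e : A →+* B), matrix_map_mul_eq_one _ hUU',
    matrix_map_mul_eq_one _ hU'U, ?_⟩
  have h2 := congrArg (fun M => M.map (e : A →+* B)) hEU
  simp only [Matrix.map_mul, stdProj_map] at h2
  rwa [show (E.map e.symm).map (e : A →+* B) = E by ext i j; simp] at h2

theorem IdempotentsSplit.of_pid {A : Type*} [CommRing A] [IsDomain A] [IsPrincipalIdealRing A] :
    IdempotentsSplit A := fun _ _ hE =>
  exists_conj_stdProj_of_free hE inferInstance inferInstance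

section

attribute [local instance] MvPolynomial.algebraMvPolynomial

/-- Over `K[x₁, …, xₙ][X]` an idempotent matrix splits up to a monic polynomial in `X`, provided
idempotent matrices split over `K(X)[x₁, …, xₙ]`. -/
theorem exists_conj_up_to_monic {K : Type*} [Field K] {n : ℕ}
    (h : IdempotentsSplit (MvPolynomial (Fin n) (FractionRing K[X]))) {N : ℕ}
    {E : Matrix (Fin N) (Fin N) (MvPolynomial (Fin n) K)[X]} (hE : E * E = E) :
    ∃ r, ∃ f : (MvPolynomial (Fin n) K)[X], f.Monic ∧
      ∃ G G' : Matrix (Fin N) (Fin N) (MvPolynomial (Fin n) K)[X],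
        G * G' = f • 1 ∧ G' * G = f • 1 ∧ E * G = G * stdProj _ N r := by
  let ψ : (MvPolynomial (Fin n) K)[X] ≃+* MvPolynomial (Fin n) K[X] :=
    ((MvPolynomial.optionEquivLeft K (Fin n)).symm.trans
      (MvPolynomial.optionEquivRight K (Fin n))).toRingEquiv
  have hψ : ∀ g : K[X], ψ (g.map MvPolynomial.C) = MvPolynomial.C g := by
    intro g
    have : ψ.toRingHom.comp (mapRingHom MvPolynomial.C) = MvPolynomial.C := by
      refine Polynomial.ringHom_ext (fun x => ?_) ?_
      · simp [ψ, MvPolynomial.optionEquivLeft_symm_C_C]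
      · simp [ψ, MvPolynomial.optionEquivLeft_symm_X]
    exact DFunLike.congr_fun this g
  let φ := algebraMap (MvPolynomial (Fin n) K[X]) (MvPolynomial (Fin n) (FractionRing K[X]))
  have hφ : Function.Injective φ :=
    MvPolynomial.map_injective _ (IsFractionRing.injective K[X] (FractionRing K[X]))
  obtain ⟨r, -, U, U', hUU', hU'U, hEU⟩ := h N ((E.map ψ).map φ) (by
    rw [← Matrix.map_mul, ← Matrix.map_mul, hE])
  rw [← stdProj_map φ] at hEU
  obtain ⟨_, ⟨g, hg, rfl⟩, G, G', hGG', hG'G, hEG⟩ := exists_clear_denominators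
    ((nonZeroDivisors K[X]).map (MvPolynomial.C (σ := Fin n))) hφ hUU' hU'U hEU
  have hg0 : g ≠ 0 := nonZeroDivisors.ne_zero hg
  let c : K[X] := C (g.leadingCoeff⁻¹)
  let χ := ψ.symm.toRingHom
  have hχ : χ (MvPolynomial.C (g * c)) = (g * c).map MvPolynomial.C := by
    rw [← hψ]
    exact ψ.symm_apply_apply _
  refine ⟨r, (g * c).map MvPolynomial.C, (monic_mul_leadingCoeff_inv hg0).map _,
    G.map χ, (MvPolynomial.C (σ := Fin n) c • G').map χ, ?_, ?_, ?_⟩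
  · rw [← hχ]
    refine matrix_map_mul_eq_smul_one χ ?_
    rw [Matrix.mul_smul, hGG', smul_smul, map_mul, mul_comm]
  · rw [← hχ]
    refine matrix_map_mul_eq_smul_one χ ?_
    rw [Matrix.smul_mul, hG'G, smul_smul, map_mul, mul_comm]
  · have h2 := congrArg (fun M => M.map χ) hEG
    simp only [Matrix.map_mul, stdProj_map] at h2
    rwa [show (E.map ψ).map χ = E by
      ext i j; simp [χ]] at h2

end

section

attribute [local instance] Polynomial.algebra Polynomial.isLocalization

theorem exists_local_conj_of_conj_up_to_monic {R : Type*} [CommRing R] [IsDomain R]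
    [UniqueFactorizationMonoid R] {N r : ℕ} {E G G' : Matrix (Fin N) (Fin N) R[X]} {f : R[X]}
    (hE : E * E = E) (hf : f.Monic) (hGG' : G * G' = f • 1) (hG'G : G' * G = f • 1)
    (hEG : E * G = G * stdProj R[X] N r) (m : Ideal R) [m.IsPrime] :
    ∃ s ∉ m, ∃ (G G' : Matrix (Fin N) (Fin N) R[X]) (D : Matrix (Fin N) (Fin N) R),
      G * G' = (C s) • 1 ∧ G' * G = (C s) • 1 ∧ E * G = G * D.map C := by
  let L := Localization.AtPrime m
  have hinj : Function.Injective (algebraMap R L) :=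
    IsLocalization.injective L m.primeCompl_le_nonZeroDivisors
  have : IsDomain L := IsLocalization.isDomain_localization m.primeCompl_le_nonZeroDivisors
  let φ := algebraMap R[X] L[X]
  have hEG' := congrArg (fun M => M.map φ) hEG
  simp only [Matrix.map_mul, stdProj_map] at hEG'
  obtain ⟨r', -, U, U', hUU', hU'U, hEU⟩ := exists_conj_of_conj_up_to_monic
    (by rw [← Matrix.map_mul, hE]) (hf.map (algebraMap R L))
    (matrix_map_mul_eq_smul_one φ hGG') (matrix_map_mul_eq_smul_one φ hG'G) hEG'
  rw [← stdProj_map φ] at hEU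
  obtain ⟨_, ⟨s, hs, rfl⟩, H, H', hHH', hH'H, hEH⟩ := exists_clear_denominators
    (m.primeCompl.map C) (Polynomial.map_injective _ hinj) hUU' hU'U hEU
  exact ⟨s, hs, H, H', stdProj R N r', hHH', hH'H, by rwa [stdProj_map]⟩

end

theorem IdempotentsSplit.polynomial {K : Type*} [Field K] {n : ℕ}
    (h₁ : IdempotentsSplit (MvPolynomial (Fin n) (FractionRing K[X])))
    (h₂ : IdempotentsSplit (MvPolynomial (Fin n) K)) :
    IdempotentsSplit (MvPolynomial (Fin n) K)[X] := by
  intro N E hE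
  obtain ⟨r, f, hf, G, G', hGG', hG'G, hEG⟩ := exists_conj_up_to_monic h₁ hE
  obtain ⟨U, U', hUU', hU'U, hEU⟩ := exists_conj_eval_zero E fun m _ =>
    exists_local_conj_of_conj_up_to_monic hE hf hGG' hG'G hEG m
  obtain ⟨r, hr, V, V', hVV', hV'V, hEV⟩ := h₂ N (E.map (evalRingHom 0)) (by
    rw [← Matrix.map_mul, hE])
  have hEV' := congrArg (fun M => M.map (C : _ →+* (MvPolynomial (Fin n) K)[X])) hEV
  simp only [Matrix.map_mul, stdProj_map] at hEV'
  have hV := matrix_map_mul_eq_one (C : _ →+* (MvPolynomial (Fin n) K)[X]) hVV'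
  have hV' := matrix_map_mul_eq_one (C : _ →+* (MvPolynomial (Fin n) K)[X]) hV'V
  refine ⟨r, hr, U * V.map C, V'.map C * U', ?_, ?_, ?_⟩
  · rw [mul_assoc, ← mul_assoc (V.map C), hV, one_mul, hUU']
  · rw [mul_assoc, ← mul_assoc U', hU'U, one_mul, hV']
  · rw [← mul_assoc, hEU, mul_assoc, hEV', mul_assoc]

/-- The Quillen–Suslin theorem, for idempotent matrices. -/
theorem idempotentsSplit_mvPolynomial (n : ℕ) (K : Type*) [Field K] :
    IdempotentsSplit (MvPolynomial (Fin n) K) := by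
  induction n generalizing K with
  | zero =>
    exact .of_ringEquiv (MvPolynomial.isEmptyAlgEquiv K (Fin 0)).symm.toRingEquiv .of_pid
  | succ n ih =>
    exact .of_ringEquiv (MvPolynomial.finSuccEquiv K n).symm.toRingEquiv
      (.polynomial (ih _) (ih _))

end

section

open scoped Matrix

theorem exists_linearIndependent_cols {Q : Type*} [Field Q] {l m r : ℕ}
    {M : Matrix (Fin l) (Fin m) Q} (hM : M.rank = r) :
    ∃ g : Fin r → Fin m, LinearIndependent Q fun k => M.col (g k) := by
  subst hM
  rw [M.rank_eq_finrank_span_cols]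
  obtain ⟨v, hv, -, hli⟩ := Submodule.exists_fun_fin_finrank_span_eq Q (Set.range M.col)
  choose g hg using hv
  exact ⟨g, by simpa only [hg] using hli⟩

theorem exists_minor_ne_zero {Q : Type*} [Field Q] {l m r : ℕ} {M : Matrix (Fin l) (Fin m) Q}
    (hM : M.rank = r) :
    ∃ (f : Fin r → Fin l) (g : Fin r → Fin m), (M.submatrix f g).det ≠ 0 := by
  obtain ⟨g, hg⟩ := exists_linearIndependent_cols hM
  obtain ⟨f, hf⟩ := exists_linearIndependent_cols (M := (M.submatrix id g)ᵀ) (r := r) (by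
    simpa using LinearIndependent.rank_matrix (M := (M.submatrix id g)ᵀ) hg)
  refine ⟨f, g, IsUnit.ne_zero ?_⟩
  rw [← Matrix.isUnit_iff_isUnit_det]
  exact Matrix.linearIndependent_rows_iff_isUnit.1 hf

/-- A matrix of rank `r` is recovered from the rows and columns of a nonzero `r × r` minor. -/
theorem cols_mul_adjugate_mul_rows_of_field {Q : Type*} [Field Q] {l m r : ℕ}
    {M : Matrix (Fin l) (Fin m) Q} (hM : M.rank = r) {f : Fin r → Fin l} {g : Fin r → Fin m}
    (hdet : (M.submatrix f g).det ≠ 0) :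
    M.submatrix id g * (M.submatrix f g).adjugate * M.submatrix f id =
      (M.submatrix f g).det • M := by
  have hle : LinearMap.range (M.submatrix id g).mulVecLin ≤ LinearMap.range M.mulVecLin := by
    simp only [Matrix.range_mulVecLin]
    exact Submodule.span_mono (Set.range_subset_iff.2 fun k => ⟨g k, rfl⟩)
  have hrank : r ≤ (M.submatrix id g).rank :=
    calc r = (M.submatrix f g).rank := by rw [Matrix.rank_of_det_ne_zero hdet, Fintype.card_fin]
      _ ≤ _ := (M.submatrix id g).rank_submatrix_le f id
  have heq := Submodule.eq_of_le_of_finrank_le hle (hM.trans_le hrank)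
  have hcol : ∀ j, ∃ t : Fin r → Q, (M.submatrix id g).mulVec t = M.col j := by
    intro j
    have : M.col j ∈ LinearMap.range M.mulVecLin := ⟨Pi.single j 1, by simp⟩
    rwa [← heq] at this
  choose t ht using hcol
  let T : Matrix (Fin r) (Fin m) Q := Matrix.of fun k j => t j k
  have hT : M.submatrix id g * T = M := by
    ext i j
    exact congrFun (ht j) i
  have hT' : M.submatrix f id = M.submatrix f g * T := by
    ext i j
    exact (congrFun (ht j) (f i)).symm
  rw [hT', Matrix.mul_assoc, ← Matrix.mul_assoc _ _ T, Matrix.adjugate_mul, Matrix.smul_mul,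
    Matrix.one_mul, Matrix.mul_smul, hT]

section

variable {A : Type*} [CommRing A] [IsDomain A] {l m r : ℕ}

theorem rank_map_fractionRing (F : Matrix (Fin l) (Fin m) A) :
    (F.map (algebraMap A (FractionRing A))).rank = F.rank := by
  let ι : (Fin l → A) →ₗ[A] (Fin l → FractionRing A) :=
    (Algebra.linearMap A (FractionRing A)).compLeft (Fin l)
  have hι : Function.Injective ι :=
    fun x y h => funext fun i => IsFractionRing.injective A (FractionRing A) (congrFun h i)
  apply le_antisymm
  · obtain ⟨g, hg⟩ := exists_linearIndependent_cols
      (M := F.map (algebraMap A (FractionRing A))) rfl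
    have hg' := (LinearIndependent.iff_fractionRing A (FractionRing A)).2 hg
    have hF : LinearIndependent A fun k => F.col (g k) := LinearIndependent.of_comp ι hg'
    let v : Fin (F.map (algebraMap A (FractionRing A))).rank → LinearMap.range F.mulVecLin :=
      fun k => ⟨F.col (g k), Pi.single (g k) 1, by simp⟩
    have hv : LinearIndependent A v := LinearIndependent.of_comp (Submodule.subtype _) hF
    rw [Matrix.rank.eq_def F]
    simpa using hv.fintype_card_le_finrank
  · obtain ⟨v, hv⟩ := exists_linearIndependent_of_le_finrank
      (R := A) (M := LinearMap.range F.mulVecLin) (n := F.rank) le_rfl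
    have h1 : LinearIndependent A fun k => ι (v k) :=
      (hv.map' (Submodule.subtype _) (Submodule.ker_subtype _)).map' ι (LinearMap.ker_eq_bot.2 hι)
    have h2 := (LinearIndependent.iff_fractionRing A (FractionRing A)).1 h1
    have hmem : ∀ k, ι (v k) ∈
        LinearMap.range (F.map (algebraMap A (FractionRing A))).mulVecLin := by
      intro k
      obtain ⟨w, hw⟩ := (v k).2
      refine ⟨algebraMap A (FractionRing A) ∘ w, funext fun i => ?_⟩
      rw [← hw]
      exact (RingHom.map_mulVec (algebraMap A (FractionRing A)) F w i).symm
    have h3 : LinearIndependent (FractionRing A)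
        fun k => (⟨ι (v k), hmem k⟩ : LinearMap.range
          (F.map (algebraMap A (FractionRing A))).mulVecLin) :=
      LinearIndependent.of_comp (Submodule.subtype _) h2
    rw [Matrix.rank.eq_def (F.map _)]
    simpa using h3.fintype_card_le_finrank

theorem rank_transpose_of_isDomain (F : Matrix (Fin l) (Fin m) A) : Fᵀ.rank = F.rank := by
  rw [← rank_map_fractionRing, ← rank_map_fractionRing F, Matrix.transpose_map,
    Matrix.rank_transpose]

theorem rank_stdProj {N : ℕ} (h : r ≤ N) : (stdProj A N r).rank = r := by
  classical
  rw [← rank_map_fractionRing, stdProj_map, stdProj, Matrix.rank_diagonal]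
  simp [Fintype.card_subtype, Fin.card_filter_val_lt, h]

theorem cols_mul_adjugate_mul_rows {F : Matrix (Fin l) (Fin m) A} (hF : F.rank = r)
    {f : Fin r → Fin l} {g : Fin r → Fin m} (hdet : (F.submatrix f g).det ≠ 0) :
    F.submatrix id g * (F.submatrix f g).adjugate * F.submatrix f id =
      (F.submatrix f g).det • F := by
  let φ := algebraMap A (FractionRing A)
  have hφ : Function.Injective φ := IsFractionRing.injective A (FractionRing A)
  have hd : φ (F.submatrix f g).det = ((F.map φ).submatrix f g).det := φ.map_det _
  have h := cols_mul_adjugate_mul_rows_of_field ((rank_map_fractionRing F).trans hF)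
    (f := f) (g := g) (hd ▸ (map_ne_zero_iff φ hφ).2 hdet)
  apply Matrix.map_injective hφ
  beta_reduce
  have hsmul : ((F.submatrix f g).det • F).map φ = φ (F.submatrix f g).det • F.map φ := by
    ext i j
    simp
  rw [Matrix.map_mul, Matrix.map_mul, hsmul, hd]
  have hadj : (F.submatrix f g).adjugate.map φ = ((F.map φ).submatrix f g).adjugate :=
    φ.map_adjugate _
  rw [hadj]
  exact h

end

theorem dvd_det_submatrix {A : Type*} [CommRing A] {l m r : ℕ} {F : Matrix (Fin l) (Fin m) A}
    {d : A} (hd : ∀ a ∈ minorsSet r F, d ∣ a) (f : Fin r → Fin l) (g : Fin r → Fin m) :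
    d ∣ (F.submatrix f g).det := by
  by_cases hf : Function.Injective f
  swap
  · obtain ⟨i, j, hij, hne⟩ := Function.not_injective_iff.1 hf
    rw [Matrix.det_zero_of_row_eq hne (by ext k; simp [hij])]
    exact dvd_zero d
  by_cases hg : Function.Injective g
  swap
  · obtain ⟨i, j, hij, hne⟩ := Function.not_injective_iff.1 hg
    rw [Matrix.det_zero_of_column_eq hne (by intro k; simp [hij])]
    exact dvd_zero d
  have h := hd _ ⟨f ∘ Tuple.sort f, g ∘ Tuple.sort g,
    (Tuple.monotone_sort f).strictMono_of_injective (hf.comp (Tuple.sort f).injective),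
    (Tuple.monotone_sort g).strictMono_of_injective (hg.comp (Tuple.sort g).injective), rfl⟩
  have h' : F.submatrix (f ∘ Tuple.sort f) (g ∘ Tuple.sort g) =
      ((F.submatrix f g).submatrix (Tuple.sort f) id).submatrix id (Tuple.sort g) := rfl
  rw [h', Matrix.det_permute', Matrix.det_permute] at h
  have hu : ∀ σ : Equiv.Perm (Fin r), IsUnit ((Equiv.Perm.sign σ : ℤ) : A) := fun σ =>
    (Equiv.Perm.sign σ).isUnit.map (Int.castRingHom A)
  rwa [(hu _).dvd_mul_left, (hu _).dvd_mul_left] at h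

theorem dvd_adjugate_mul_rows {A : Type*} [CommRing A] {l m r : ℕ} {F : Matrix (Fin l) (Fin m) A}
    {d : A} (hd : ∀ a ∈ minorsSet r F, d ∣ a) (f : Fin r → Fin l) (g : Fin r → Fin m)
    (k : Fin r) (j : Fin m) : d ∣ ((F.submatrix f g).adjugate * F.submatrix f id) k j := by
  have h : ((F.submatrix f g).adjugate * F.submatrix f id) k j =
      (F.submatrix f (Function.update g k j)).det := by
    have h1 : ((F.submatrix f g).adjugate * F.submatrix f id) k j =
        (F.submatrix f g).adjugate.mulVec (fun i => F (f i) j) k := rfl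
    rw [h1, ← Matrix.cramer_eq_adjugate_mulVec, Matrix.cramer_apply]
    congr 1
    ext i i'
    by_cases hi : i' = k
    · subst hi
      simp
    · simp [hi]
  rw [h]
  exact dvd_det_submatrix hd f _

/-- If the reduced maximal minors generate the unit ideal, then the row module of `F` is contained
in a direct summand of the same rank. -/
theorem exists_idempotent_of_reducedMinorsUnitIdeal {A : Type*} [CommRing A] [IsDomain A]
    {l m r : ℕ} {F : Matrix (Fin l) (Fin m) A} (hF : F.rank = r)
    (hJ : ReducedMinorsUnitIdeal r F) :
    ∃ E : Matrix (Fin m) (Fin m) A, E * E = E ∧ F * E = F ∧ E.rank = r := by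
  obtain ⟨d, ⟨hd, -⟩, hspan⟩ := hJ
  have hd0 : d ≠ 0 := by
    obtain ⟨f, g, hfg⟩ := exists_minor_ne_zero ((rank_map_fractionRing F).trans hF)
    rintro rfl
    have h := zero_dvd_iff.1 (dvd_det_submatrix hd f g)
    apply hfg
    have h' : ((F.map (algebraMap A (FractionRing A))).submatrix f g).det =
      algebraMap A (FractionRing A) (F.submatrix f g).det := (RingHom.map_det (algebraMap A _) _).symm
    rw [h', h, map_zero]
  have key : ∀ b ∈ Ideal.span {b : A | d * b ∈ minorsSet r F},
      ∃ (P : Matrix (Fin m) (Fin m) A) (H : Matrix (Fin m) (Fin l) A),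
        d • P = H * F ∧ F * P = b • F := by
    intro b hb
    induction hb using Submodule.span_induction with
    | mem b hb =>
      by_cases hb0 : b = 0
      · exact ⟨0, 0, by simp, by simp [hb0]⟩
      obtain ⟨f, g, -, -, hfg⟩ := hb
      choose C hC using dvd_adjugate_mul_rows hd f g
      let ι : Matrix (Fin m) (Fin r) A := (1 : Matrix (Fin m) (Fin m) A).submatrix id g
      let π : Matrix (Fin r) (Fin l) A := (1 : Matrix (Fin l) (Fin l) A).submatrix f id
      have hι : F * ι = F.submatrix id g := by
        ext i j
        simp [ι, Matrix.mul_apply, Matrix.one_apply]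
      have hπ : π * F = F.submatrix f id := by
        ext i j
        simp [π, Matrix.mul_apply, Matrix.one_apply]
      have hC' : d • Matrix.of C = (F.submatrix f g).adjugate * F.submatrix f id := by
        ext k j
        exact (hC k j).symm
      refine ⟨ι * Matrix.of C, ι * (F.submatrix f g).adjugate * π, ?_, ?_⟩
      · rw [← Matrix.mul_smul, hC', Matrix.mul_assoc _ π, hπ, Matrix.mul_assoc]
      · apply smul_right_injective _ hd0
        beta_reduce
        rw [← Matrix.mul_smul, ← Matrix.mul_smul, hC', ← Matrix.mul_assoc, hι, ← Matrix.mul_assoc,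
          cols_mul_adjugate_mul_rows hF (hfg ▸ mul_ne_zero hd0 hb0), ← hfg, smul_smul]
    | zero => exact ⟨0, 0, by simp, by simp⟩
    | add b b' _ _ hb hb' =>
      obtain ⟨P, H, h1, h2⟩ := hb
      obtain ⟨P', H', h1', h2'⟩ := hb'
      exact ⟨P + P', H + H', by rw [smul_add, h1, h1', Matrix.add_mul],
        by rw [Matrix.mul_add, h2, h2', add_smul]⟩
    | smul c b _ hb =>
      obtain ⟨P, H, h1, h2⟩ := hb
      exact ⟨c • P, c • H, by rw [smul_comm, h1, Matrix.smul_mul],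
        by rw [Matrix.mul_smul, h2, smul_smul, smul_eq_mul]⟩
  obtain ⟨E, H, hEH, hFE⟩ := key 1 (hspan ▸ Submodule.mem_top)
  rw [one_smul] at hFE
  refine ⟨E, smul_right_injective _ hd0 ?_, hFE, le_antisymm ?_ ?_⟩
  · beta_reduce
    rw [← Matrix.smul_mul, hEH, Matrix.mul_assoc, hFE]
  · rw [← Matrix.rank_smul_of_mem_nonZeroDivisors E (mem_nonZeroDivisors_of_ne_zero hd0), hEH,
      ← hF]
    exact Matrix.rank_mul_le_right H F
  · rw [← hF]
    nth_rw 1 [← hFE]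
    exact Matrix.rank_mul_le_right F E

theorem minorsSet_transpose {A : Type*} [CommRing A] {l m : ℕ} (r : ℕ)
    (F : Matrix (Fin l) (Fin m) A) : minorsSet r Fᵀ = minorsSet r F := by
  ext a
  constructor
  · rintro ⟨f, g, hf, hg, rfl⟩
    exact ⟨g, f, hg, hf, by rw [← Matrix.det_transpose]; rfl⟩
  · rintro ⟨f, g, hf, hg, rfl⟩
    exact ⟨g, f, hg, hf, by rw [← Matrix.det_transpose]; rfl⟩

theorem exists_conj_stdProj_of_reducedMinorsUnitIdeal {A : Type*} [CommRing A] [IsDomain A]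
    (hA : IdempotentsSplit A) {l m r : ℕ} {F : Matrix (Fin l) (Fin m) A} (hF : F.rank = r)
    (hJ : ReducedMinorsUnitIdeal r F) :
    ∃ V : Matrix (Fin m) (Fin m) A, IsUnit V.det ∧ F * V = F * V * stdProj A m r := by
  obtain ⟨E, hE, hFE, hEr⟩ := exists_idempotent_of_reducedMinorsUnitIdeal hF hJ
  obtain ⟨s, hs, V, V', hVV', -, hEV⟩ := hA m E hE
  have hV : IsUnit V.det := by
    rw [← Matrix.isUnit_iff_isUnit_det]
    exact IsUnit.of_mul_eq_one V' hVV'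
  have hsr : s = r := by
    rw [← rank_stdProj (A := A) hs, ← Matrix.rank_mul_eq_right_of_isUnit_det V _ hV, ← hEV,
      Matrix.rank_mul_eq_left_of_isUnit_det V E hV, hEr]
  subst hsr
  refine ⟨V, hV, ?_⟩
  rw [Matrix.mul_assoc, ← hEV, ← Matrix.mul_assoc, hFE]

/-- The block form of a matrix whose reduced maximal minors generate the unit ideal, over a domain
with split idempotents. -/
theorem exists_block_form {A : Type*} [CommRing A] [IsDomain A] (hA : IdempotentsSplit A)
    {l m r : ℕ} {F : Matrix (Fin l) (Fin m) A} (hF : F.rank = r)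
    (hJ : ReducedMinorsUnitIdeal r F) :
    ∃ (U : Matrix (Fin l) (Fin l) A) (V : Matrix (Fin m) (Fin m) A) (G : Matrix (Fin r) (Fin r) A),
      IsUnit U.det ∧ IsUnit V.det ∧ U * F * V = Matrix.of fun (i : Fin l) (j : Fin m) =>
        if h : (i : ℕ) < r ∧ (j : ℕ) < r then G ⟨i, h.1⟩ ⟨j, h.2⟩ else 0 := by
  obtain ⟨V, hV, hFV⟩ := exists_conj_stdProj_of_reducedMinorsUnitIdeal
    hA hF hJ
  obtain ⟨W, hW, hFW⟩ := exists_conj_stdProj_of_reducedMinorsUnitIdeal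
    hA ((rank_transpose_of_isDomain F).trans hF)
    (by rwa [ReducedMinorsUnitIdeal, minorsSet_transpose])
  have hl : r ≤ l := hF ▸ F.rank_le_height
  have hm : r ≤ m := hF ▸ F.rank_le_width
  have hcol : Wᵀ * F * V = Wᵀ * F * V * stdProj A m r := by
    rw [Matrix.mul_assoc Wᵀ, Matrix.mul_assoc Wᵀ, ← hFV]
  have hrow : Wᵀ * F * V = stdProj A l r * (Wᵀ * F * V) := by
    have h := congrArg Matrix.transpose hFW
    simp only [Matrix.transpose_mul, Matrix.transpose_transpose, stdProj,
      Matrix.diagonal_transpose] at h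
    rw [stdProj, ← Matrix.mul_assoc, ← h]
  refine ⟨Wᵀ, V, (Wᵀ * F * V).submatrix (Fin.castLE hl) (Fin.castLE hm),
    by rwa [Matrix.det_transpose], hV, ?_⟩
  ext i j
  rw [Matrix.of_apply]
  split_ifs with h
  · rfl
  · rcases not_and_or.1 h with h | h
    · rw [hrow, stdProj, Matrix.diagonal_mul, if_neg h, zero_mul]
    · rw [hcol, stdProj, Matrix.mul_diagonal, if_neg h, mul_zero]

end

/-- let `F ∈ A^{l×m}` (`A = K[x₁, …, x_n]`) with `rank F = r > 0`.
If the `r × r` reduced minors of `F` generate the unit ideal (`J_r(F) = A`),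
then there are `U ∈ GL_l(A)`, `V ∈ GL_m(A)` such that `U·F·V` is the block
matrix with an `r × r` block `G` in the upper-left corner and zeros elsewhere. -/
theorem stmt10 {K : Type*} [Field K] {n l m r : ℕ} (hr : 0 < r)
    (F : Matrix (Fin l) (Fin m) (MvPolynomial (Fin n) K))
    (hrank : F.rank = r)
    (hJ : ReducedMinorsUnitIdeal r F) :
    ∃ (U : Matrix (Fin l) (Fin l) (MvPolynomial (Fin n) K))
      (V : Matrix (Fin m) (Fin m) (MvPolynomial (Fin n) K))
      (G : Matrix (Fin r) (Fin r) (MvPolynomial (Fin n) K)),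
      IsUnit U.det ∧ IsUnit V.det ∧
      U * F * V = Matrix.of (fun (i : Fin l) (j : Fin m) =>
        if h : (i : ℕ) < r ∧ (j : ℕ) < r then G ⟨i, h.1⟩ ⟨j, h.2⟩ else 0) :=
  exists_block_form (idempotentsSplit_mvPolynomial n K) hrank hJ
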